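/- Let ν ≥ 1 be an integer and (λ_j)_{j≥1} positive reals with λ_j ≥ λ₁ > 0 for all j and ∑_{j≥1} λ_j^{−p₀} < ∞ for some p₀ ∈ ℕ. Let (f_j)_{j≥1} be complex numbers. Then the following are equivalent: (a) there exists C > 0 such that for every k ∈ ℕ: ∑_{j≥1} λ_j^{2k}|f_j|² ≤ ((νk)!)² · C^{2k+2}; (b) there exist C' > 0 and L' > 0 such that |f_j| ≤ C' · exp(−L'·λ_j^{1/ν}) for all j. -/

import Mathlib

/-!
With `x = lam j ^ (1 / ν)`, both conditions compare `‖f j‖` with the functions `n ! / x ^ n`.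
For one direction, `(ν k)! / x ^ (ν k)` is at most `exp (ν - x / e)` when `k = ⌊x / (e ν)⌋`, so
moment bounds for all `k` force exponential decay. Conversely, write
`exp (-2 L x) = exp (-L x / 2) ^ 2 * exp (-L x)`: the inequality `y ^ n ≤ n ! exp y` lets the square
absorb `lam j ^ (2 k)` at the cost of `((ν k)!) ^ 2`, and turns the remaining factor into
a multiple of the summable weight `lam j ^ (-p₀)`.
-/

section SeeleyCharacterisation

open scoped Nat

theorem rpow_one_div_natCast_pow_mul {t : ℝ} (ht : 0 ≤ t) {ν : ℕ} (hν : ν ≠ 0) (k : ℕ) :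
    (t ^ (1 / (ν : ℝ))) ^ (ν * k) = t ^ k := by
  rw [pow_mul, one_div, Real.rpow_inv_natCast_pow ht hν]

theorem pow_mul_exp_neg_mul_le {L x : ℝ} (hL : 0 < L) (hx : 0 ≤ x) (n : ℕ) :
    x ^ n * Real.exp (-(L * x)) ≤ n ! / L ^ n := by
  have h := Real.pow_div_factorial_le_exp (L * x) (by positivity) n
  rw [div_le_iff₀ (by positivity)] at h
  rw [Real.exp_neg, ← div_eq_mul_inv, div_le_div_iff₀ (Real.exp_pos _) (by positivity)]
  calc x ^ n * L ^ n = (L * x) ^ n := by rw [← mul_pow, mul_comm]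
    _ ≤ n ! * Real.exp (L * x) := by rwa [mul_comm (n ! : ℝ)]

theorem exists_factorial_mul_le_exp_mul_pow {ν : ℕ} (hν : 0 < ν) {x : ℝ} (hx : 0 ≤ x) :
    ∃ k : ℕ, ((ν * k)! : ℝ) ≤ Real.exp (ν - x / Real.exp 1) * x ^ (ν * k) := by
  set y := x / Real.exp 1
  have hy : 0 ≤ y := by positivity
  have hν' : (0 : ℝ) < ν := by exact_mod_cast hν
  set k := ⌊y / ν⌋₊
  have h_lower : (ν * k : ℝ) ≤ y :=
    (le_div_iff₀' hν').1 (Nat.floor_le (div_nonneg hy hν'.le))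
  have h_upper : y < ν * (k + 1) :=
    (div_lt_iff₀' hν').1 (Nat.lt_floor_add_one _)
  refine ⟨k, ?_⟩
  calc ((ν * k)! : ℝ) ≤ (ν * k : ℝ) ^ (ν * k) := by exact_mod_cast Nat.factorial_le_pow (ν * k)
    _ ≤ y ^ (ν * k) := by gcongr
    _ = Real.exp (-(ν * k : ℕ)) * x ^ (ν * k) := by
      rw [div_pow, ← Real.exp_nat_mul, mul_one, Real.exp_neg, div_eq_inv_mul]
    _ ≤ Real.exp (ν - y) * x ^ (ν * k) := by
      gcongr
      push_cast
      linarith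

theorem le_exp_neg_of_forall_pow_mul_le_factorial {ν : ℕ} (hν : 0 < ν) {x a A : ℝ} (hx : 0 < x)
    (hA : 0 ≤ A) (h : ∀ k : ℕ, x ^ (ν * k) * a ≤ A * (ν * k)!) :
    a ≤ A * Real.exp (ν - x / Real.exp 1) := by
  obtain ⟨k, hk⟩ := exists_factorial_mul_le_exp_mul_pow hν hx.le
  refine le_of_mul_le_mul_left ?_ (pow_pos hx (ν * k))
  calc x ^ (ν * k) * a ≤ A * (ν * k)! := h k
    _ ≤ A * (Real.exp (ν - x / Real.exp 1) * x ^ (ν * k)) := by gcongr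
    _ = x ^ (ν * k) * (A * Real.exp (ν - x / Real.exp 1)) := by ring

theorem sq_pow_mul_le_of_le_exp_neg {x a B L : ℝ} (hx : 0 < x) (hL : 0 < L) (ha : 0 ≤ a)
    (h : a ≤ B * Real.exp (-(L * x))) (n m : ℕ) :
    (x ^ n * a) ^ 2 ≤ B ^ 2 * (n ! / (L / 2) ^ n) ^ 2 * (m ! / L ^ m / x ^ m) := by
  have h_split : Real.exp (-(L * x)) ^ 2 =
      Real.exp (-(L / 2 * x)) ^ 2 * Real.exp (-(L * x)) := by
    simp only [← Real.exp_nat_mul, ← Real.exp_add]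
    congr 1
    push_cast
    ring
  have h_moment := pow_mul_exp_neg_mul_le (half_pos hL) hx.le n
  have h_weight : Real.exp (-(L * x)) ≤ m ! / L ^ m / x ^ m :=
    (le_div_iff₀' (by positivity)).2 (pow_mul_exp_neg_mul_le hL hx.le m)
  calc (x ^ n * a) ^ 2 ≤ (x ^ n * (B * Real.exp (-(L * x)))) ^ 2 := by gcongr
    _ = B ^ 2 * (x ^ n) ^ 2 * Real.exp (-(L * x)) ^ 2 := by ring
    _ = B ^ 2 * (x ^ n * Real.exp (-(L / 2 * x))) ^ 2 * Real.exp (-(L * x)) := by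
      rw [h_split]
      ring
    _ ≤ B ^ 2 * (n ! / (L / 2) ^ n) ^ 2 * (m ! / L ^ m / x ^ m) := by gcongr

theorem exists_pos_forall_mul_pow_le_pow_add (A : ℝ) {M : ℝ} (hM : 0 ≤ M) {m : ℕ} (hm : m ≠ 0) :
    ∃ C > (0 : ℝ), ∀ n : ℕ, A * M ^ n ≤ C ^ (n + m) := by
  set C := max 1 (max M A)
  have hC : 1 ≤ C := le_max_left _ _
  have hMC : M ≤ C := (le_max_left M A).trans (le_max_right _ _)
  have hAC : A ≤ C ^ m :=
    ((le_max_right M A).trans (le_max_right _ _)).trans (le_self_pow₀ hC hm)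
  refine ⟨C, by positivity, fun n ↦ ?_⟩
  calc A * M ^ n ≤ C ^ m * C ^ n := by gcongr
    _ = C ^ (n + m) := by rw [← pow_add, add_comm]

variable {ι E : Type*} [SeminormedAddCommGroup E] {ν : ℕ} {lam : ι → ℝ} {f : ι → E}

theorem norm_le_exp_neg_of_tsum_le (hν : 0 < ν) (hlam : ∀ j, 0 < lam j) {C : ℝ} (hC : 0 < C)
    (h : ∀ k : ℕ, Summable (fun j ↦ lam j ^ (2 * k) * ‖f j‖ ^ 2) ∧
      ∑' j, lam j ^ (2 * k) * ‖f j‖ ^ 2 ≤ ((ν * k)! : ℝ) ^ 2 * C ^ (2 * k + 2)) (j : ι) :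
    ‖f j‖ ≤ C * Real.exp ν *
      Real.exp (-((C ^ (1 / (ν : ℝ)) * Real.exp 1)⁻¹ * lam j ^ (1 / (ν : ℝ)))) := by
  have hj := hlam j
  have h_term (k : ℕ) : lam j ^ k * ‖f j‖ ≤ (ν * k)! * C ^ (k + 1) := by
    refine le_of_sq_le_sq ?_ (by positivity)
    calc (lam j ^ k * ‖f j‖) ^ 2 = lam j ^ (2 * k) * ‖f j‖ ^ 2 := by ring
      _ ≤ ∑' i, lam i ^ (2 * k) * ‖f i‖ ^ 2 :=
        (h k).1.le_tsum j fun i _ ↦ mul_nonneg (pow_nonneg (hlam i).le _) (sq_nonneg _)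
      _ ≤ ((ν * k)! : ℝ) ^ 2 * C ^ (2 * k + 2) := (h k).2
      _ = ((ν * k)! * C ^ (k + 1)) ^ 2 := by ring
  have h_scaled (k : ℕ) :
      ((lam j / C) ^ (1 / (ν : ℝ))) ^ (ν * k) * ‖f j‖ ≤ C * (ν * k)! := by
    rw [rpow_one_div_natCast_pow_mul (by positivity) hν.ne', div_pow, div_mul_eq_mul_div,
      div_le_iff₀ (by positivity)]
    exact (h_term k).trans_eq (by ring)
  refine (le_exp_neg_of_forall_pow_mul_le_factorial hν (by positivity) hC.le h_scaled).trans_eq ?_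
  rw [mul_assoc, ← Real.exp_add, Real.div_rpow hj.le hC.le, div_div, div_eq_inv_mul, sub_eq_add_neg]

theorem pow_mul_norm_sq_le_of_norm_le_exp_neg (hν : 0 < ν) {j : ι} (hj : 0 < lam j)
    {B L : ℝ} (hL : 0 < L)
    (h : ‖f j‖ ≤ B * Real.exp (-(L * lam j ^ (1 / (ν : ℝ))))) (p k : ℕ) :
    lam j ^ (2 * k) * ‖f j‖ ^ 2 ≤
      B ^ 2 * ((ν * k)! / (L / 2) ^ (ν * k)) ^ 2 * ((ν * p)! / L ^ (ν * p)) *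
        (1 / lam j ^ p) := by
  have h_sq := sq_pow_mul_le_of_le_exp_neg (Real.rpow_pos_of_pos hj _) hL (norm_nonneg _) h
    (ν * k) (ν * p)
  simp only [rpow_one_div_natCast_pow_mul hj.le hν.ne'] at h_sq
  calc lam j ^ (2 * k) * ‖f j‖ ^ 2 = (lam j ^ k * ‖f j‖) ^ 2 := by ring
    _ ≤ _ := h_sq
    _ = _ := by ring

theorem exists_tsum_le_of_norm_le_exp_neg (hν : 0 < ν) (hlam : ∀ j, 0 < lam j) {p : ℕ}
    (hp : Summable fun j ↦ 1 / lam j ^ p) {B L : ℝ} (hL : 0 < L)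
    (h : ∀ j, ‖f j‖ ≤ B * Real.exp (-(L * lam j ^ (1 / (ν : ℝ))))) :
    ∃ C > (0 : ℝ), ∀ k : ℕ, Summable (fun j ↦ lam j ^ (2 * k) * ‖f j‖ ^ 2) ∧
      ∑' j, lam j ^ (2 * k) * ‖f j‖ ^ 2 ≤ ((ν * k)! : ℝ) ^ 2 * C ^ (2 * k + 2) := by
  set A := B ^ 2 * ((ν * p)! / L ^ (ν * p)) * ∑' j, 1 / lam j ^ p with hA
  obtain ⟨C, hC, hAC⟩ := exists_pos_forall_mul_pow_le_pow_add A
    (M := ((L / 2) ^ ν)⁻¹) (by positivity) two_ne_zero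
  refine ⟨C, hC, fun k ↦ ?_⟩
  have h_term (j : ι) := pow_mul_norm_sq_le_of_norm_le_exp_neg hν (hlam j) hL (h j) p k
  have h_major := hp.mul_left
    (B ^ 2 * ((ν * k)! / (L / 2) ^ (ν * k)) ^ 2 * ((ν * p)! / L ^ (ν * p)))
  have h_summable : Summable fun j ↦ lam j ^ (2 * k) * ‖f j‖ ^ 2 :=
    h_major.of_nonneg_of_le (fun j ↦ mul_nonneg (pow_nonneg (hlam j).le _) (sq_nonneg _)) h_term
  refine ⟨h_summable, ?_⟩
  calc ∑' j, lam j ^ (2 * k) * ‖f j‖ ^ 2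
    _ ≤ B ^ 2 * ((ν * k)! / (L / 2) ^ (ν * k)) ^ 2 * ((ν * p)! / L ^ (ν * p)) *
        ∑' j, 1 / lam j ^ p := by
      rw [← tsum_mul_left]
      exact h_summable.tsum_le_tsum h_term h_major
    _ = ((ν * k)! : ℝ) ^ 2 * (A * ((L / 2) ^ ν)⁻¹ ^ (2 * k)) := by
      rw [hA, pow_mul (L / 2)]
      ring
    _ ≤ ((ν * k)! : ℝ) ^ 2 * C ^ (2 * k + 2) := by
      gcongr
      exact hAC (2 * k)

theorem stmt_11_general (hν : 1 ≤ ν) (hlam : ∀ j, 0 < lam j) {p₀ : ℕ}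
    (hp₀ : Summable fun j ↦ 1 / lam j ^ p₀) :
    (∃ C > (0 : ℝ), ∀ k : ℕ, Summable (fun j ↦ lam j ^ (2 * k) * ‖f j‖ ^ 2) ∧
        ∑' j, lam j ^ (2 * k) * ‖f j‖ ^ 2 ≤ ((ν * k)! : ℝ) ^ 2 * C ^ (2 * k + 2)) ↔
      ∃ C' > (0 : ℝ), ∃ L' > (0 : ℝ), ∀ j,
        ‖f j‖ ≤ C' * Real.exp (-(L' * lam j ^ (1 / (ν : ℝ)))) := by
  constructor
  · rintro ⟨C, hC, h⟩
    exact ⟨C * Real.exp ν, by positivity, (C ^ (1 / (ν : ℝ)) * Real.exp 1)⁻¹, by positivity,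
      norm_le_exp_neg_of_tsum_le hν hlam hC h⟩
  · rintro ⟨B, -, L, hL, h⟩
    exact exists_tsum_le_of_norm_le_exp_neg hν hlam hp₀ hL h

end SeeleyCharacterisation

theorem stmt_11 (ν : ℕ) (hν : 1 ≤ ν)
    (lam : ℕ → ℝ) (hlam : ∀ j, 0 < lam j) (hlb : ∀ j, lam 0 ≤ lam j)
    (p₀ : ℕ) (hp₀ : Summable (fun j => 1 / lam j ^ p₀))
    (f : ℕ → ℂ) :
    (∃ C > (0 : ℝ), ∀ k : ℕ,
        Summable (fun j => lam j ^ (2 * k) * ‖f j‖ ^ 2) ∧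
        (∑' j, lam j ^ (2 * k) * ‖f j‖ ^ 2) ≤
          (((ν * k).factorial : ℝ)) ^ 2 * C ^ (2 * k + 2)) ↔
    (∃ C' > (0 : ℝ), ∃ L' > (0 : ℝ), ∀ j,
        ‖f j‖ ≤ C' * Real.exp (-(L' * lam j ^ (1 / (ν : ℝ))))) :=
  stmt_11_general hν hlam hp₀
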